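/- arXiv:2003.11227 — 2 statements merged into one kernel-verified Lean document; each statement's English description precedes it below -/
import Mathlib

section
/- Let A'_π = [[A + B D_π C, B C_π],[B_π C, A_π]], B'_{π,w} = [[I_n],[0_{s×n}]] and B'_{π,z} = [[B D_π],[B_π]]. Then for every integer k ≥ 1, (A'_π)^k · B'_{π,w} = [[A^k],[0_{s×n}]] + Σ_{j=1}^{k} (A'_π)^{j-1} · B'_{π,z} · C · A^{k-j}. -/
open Matrix Finset

/-- for the closed-loop matrix `A'_π = [[A + B D_π C, B C_π],[B_π C, A_π]]`,
`B'_{π,w} = [[I_n],[0]]` and `B'_{π,z} = [[B D_π],[B_π]]`, for every `k ≥ 1`,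
`(A'_π)^k · B'_{π,w} = [[A^k],[0]] + Σ_{j=1}^{k} (A'_π)^{j-1} · B'_{π,z} · C · A^{k-j}`. -/
theorem closed_loop_power_mul_Bw {n s p m : ℕ}
    (A : Matrix (Fin n) (Fin n) ℝ) (B : Matrix (Fin n) (Fin p) ℝ)
    (C : Matrix (Fin m) (Fin n) ℝ)
    (Aπ : Matrix (Fin s) (Fin s) ℝ) (Bπ : Matrix (Fin s) (Fin m) ℝ)
    (Cπ : Matrix (Fin p) (Fin s) ℝ) (Dπ : Matrix (Fin p) (Fin m) ℝ) :
    ∀ k : ℕ, 1 ≤ k →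
      (Matrix.fromBlocks (A + B * Dπ * C) (B * Cπ) (Bπ * C) Aπ) ^ k *
          Matrix.fromRows (1 : Matrix (Fin n) (Fin n) ℝ) (0 : Matrix (Fin s) (Fin n) ℝ) =
        Matrix.fromRows (A ^ k) (0 : Matrix (Fin s) (Fin n) ℝ) +
          ∑ j ∈ Finset.Icc 1 k,
            (Matrix.fromBlocks (A + B * Dπ * C) (B * Cπ) (Bπ * C) Aπ) ^ (j - 1) *
              Matrix.fromRows (B * Dπ) Bπ * C * A ^ (k - j) := by
  intro k _
  have key : Matrix.fromBlocks (A + B * Dπ * C) (B * Cπ) (Bπ * C) Aπ *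
      Matrix.fromRows (1 : Matrix (Fin n) (Fin n) ℝ) (0 : Matrix (Fin s) (Fin n) ℝ) =
      Matrix.fromRows (1 : Matrix (Fin n) (Fin n) ℝ) (0 : Matrix (Fin s) (Fin n) ℝ) * A +
        Matrix.fromRows (B * Dπ) Bπ * C := by
    rw [Matrix.fromBlocks_mul_fromRows, Matrix.fromRows_mul, Matrix.fromRows_mul]
    ext (i | i) j <;> simp
  have hk : ∀ k : ℕ, Matrix.fromRows (A ^ k) (0 : Matrix (Fin s) (Fin n) ℝ) =
      Matrix.fromRows (1 : Matrix (Fin n) (Fin n) ℝ) (0 : Matrix (Fin s) (Fin n) ℝ) * A ^ k := by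
    intro k
    rw [Matrix.fromRows_mul]
    simp
  rw [hk]
  generalize Matrix.fromBlocks (A + B * Dπ * C) (B * Cπ) (Bπ * C) Aπ = M at *
  generalize Matrix.fromRows (1 : Matrix (Fin n) (Fin n) ℝ) (0 : Matrix (Fin s) (Fin n) ℝ) = W at *
  generalize Matrix.fromRows (B * Dπ) Bπ = Z at *
  clear hk
  rename_i h
  clear h
  induction k with
  | zero => simp
  | succ k ih =>
    rw [pow_succ, Matrix.mul_assoc, key, Matrix.mul_add, ← Matrix.mul_assoc, ih,
      Finset.sum_Icc_succ_top (by omega), Matrix.add_mul, Matrix.sum_mul, pow_succ A,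
      ← Matrix.mul_assoc W, add_assoc]
    congr 2
    · refine Finset.sum_congr rfl fun j hj => ?_
      have : k + 1 - j = (k - j) + 1 := by
        have := (Finset.mem_Icc.mp hj).2
        omega
      rw [this, pow_succ, ← Matrix.mul_assoc]
    · simp [Matrix.mul_assoc]
end

section
/- Let Φ ∈ ℝ^{N×d}, G ∈ ℝ^{m×d}, E ∈ ℝ^{N×m}, M ∈ ℝ^{N×m}, λ > 0, and set Y = Φ Gᵀ + E + M, V = λ I_d + Φᵀ Φ, and Ĝᵀ = V^{-1} Φᵀ Y (the ridge-regression estimator). Then √(Tr((Ĝ − G) V (Ĝ − G)ᵀ)) ≤ √(Tr(Eᵀ Φ V^{-1} Φᵀ E)) + √(Tr(Mᵀ Φ V^{-1} Φᵀ M)) + √λ · ‖G‖_F. -/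
open Matrix Finset

-- Use the Frobenius norm on matrices.
attribute [local instance] Matrix.frobeniusNormedAddCommGroup

theorem frob_sqrt_trace {p q : ℕ} (A : Matrix (Fin p) (Fin q) ℝ) :
    Real.sqrt ((Aᵀ * A).trace) = ‖A‖ := by
  rw [Matrix.frobenius_norm_def, Real.sqrt_eq_rpow]
  congr 1
  simp only [Matrix.trace, Matrix.diag, Matrix.mul_apply, Matrix.transpose_apply]
  rw [Finset.sum_comm]
  refine Finset.sum_congr rfl fun i _ => Finset.sum_congr rfl fun j _ => ?_
  rw [Real.rpow_two, Real.norm_eq_abs, sq_abs, sq]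

theorem trace_gram_nonneg {p q : ℕ} (A : Matrix (Fin p) (Fin q) ℝ) :
    0 ≤ (Aᵀ * A).trace := by
  simp only [Matrix.trace, Matrix.diag, Matrix.mul_apply, Matrix.transpose_apply]
  exact Finset.sum_nonneg fun i _ => Finset.sum_nonneg fun j _ => mul_self_nonneg _

/-- deterministic error decomposition for the ridge-regression estimator.
If `Y = Φ Gᵀ + E + M`, `V = λ I + Φᵀ Φ` and `Ĝᵀ = V⁻¹ Φᵀ Y`, then
`√(Tr((Ĝ − G) V (Ĝ − G)ᵀ)) ≤ √(Tr(Eᵀ Φ V⁻¹ Φᵀ E)) + √(Tr(Mᵀ Φ V⁻¹ Φᵀ M)) + √λ ‖G‖_F`. -/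
theorem ridge_regression_error_decomposition {N d m : ℕ}
    (Φ : Matrix (Fin N) (Fin d) ℝ) (G Ghat : Matrix (Fin m) (Fin d) ℝ)
    (E M Y : Matrix (Fin N) (Fin m) ℝ) (V : Matrix (Fin d) (Fin d) ℝ)
    (lam : ℝ) (hlam : 0 < lam)
    (hY : Y = Φ * Gᵀ + E + M)
    (hV : V = lam • (1 : Matrix (Fin d) (Fin d) ℝ) + Φᵀ * Φ)
    (hGhat : Ghatᵀ = V⁻¹ * Φᵀ * Y) :
    Real.sqrt (((Ghat - G) * V * (Ghat - G)ᵀ).trace) ≤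
      Real.sqrt ((Eᵀ * Φ * V⁻¹ * Φᵀ * E).trace) +
        Real.sqrt ((Mᵀ * Φ * V⁻¹ * Φᵀ * M).trace) +
        Real.sqrt lam * ‖G‖ := by
  have hpd : V.PosDef := by
    rw [hV]
    refine Matrix.PosDef.add_posSemidef (Matrix.PosDef.one.smul hlam) ?_
    simpa using Matrix.posSemidef_conjTranspose_mul_self Φ
  have hdet : IsUnit V.det := hpd.det_pos.ne'.isUnit
  have hVt : Vᵀ = V := by simpa using hpd.isHermitian.eq
  have hVit : (V⁻¹)ᵀ = V⁻¹ := by rw [Matrix.transpose_nonsing_inv, hVt]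
  obtain ⟨B, hB⟩ : ∃ B : Matrix (Fin d) (Fin d) ℝ, V = Bᵀ * B := by
    open scoped MatrixOrder in
    obtain ⟨B, hB⟩ := CStarAlgebra.nonneg_iff_eq_star_mul_self.mp hpd.posSemidef.nonneg
    exact ⟨B, by simpa [Matrix.star_eq_conjTranspose] using hB⟩
  have hq : ∀ D : Matrix (Fin d) (Fin m) ℝ, Real.sqrt ((Dᵀ * V * D).trace) = ‖B * D‖ := by
    intro D
    rw [← frob_sqrt_trace, hB, Matrix.transpose_mul]
    simp only [Matrix.mul_assoc]
  have hqi : ∀ X : Matrix (Fin N) (Fin m) ℝ,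
      Real.sqrt ((Xᵀ * Φ * V⁻¹ * Φᵀ * X).trace) = ‖B * (V⁻¹ * Φᵀ * X)‖ := by
    intro X
    rw [← hq]
    simp only [Matrix.transpose_mul, Matrix.transpose_transpose, hVit, Matrix.mul_assoc]
    rw [Matrix.mul_nonsing_inv_cancel_left _ _ hdet]
  have hZ : V * (V⁻¹ * Gᵀ) = Gᵀ := Matrix.mul_nonsing_inv_cancel_left _ _ hdet
  obtain ⟨Z, hZd⟩ : ∃ Z, Z = V⁻¹ * Gᵀ := ⟨_, rfl⟩
  rw [← hZd] at hZ
  have hD : (Ghat - G)ᵀ = V⁻¹ * Φᵀ * E + V⁻¹ * Φᵀ * M - lam • Z := by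
    have h1 : V⁻¹ * Φᵀ * (Φ * Gᵀ) = Gᵀ - lam • Z := by
      have h2 : Φᵀ * Φ = V - lam • (1 : Matrix (Fin d) (Fin d) ℝ) := by rw [hV]; simp
      rw [Matrix.mul_assoc, ← Matrix.mul_assoc Φᵀ, h2, Matrix.sub_mul, Matrix.mul_sub,
        Matrix.nonsing_inv_mul_cancel_left _ _ hdet, hZd]
      simp
    rw [Matrix.transpose_sub, hGhat, hY, Matrix.mul_add, Matrix.mul_add, h1]
    abel
  have hbias : ‖B * (lam • Z)‖ ≤ Real.sqrt lam * ‖G‖ := by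
    have hG : ‖G‖ = Real.sqrt ((Gᵀᵀ * Gᵀ).trace) := by
      rw [frob_sqrt_trace, Matrix.frobenius_norm_transpose]
    rw [← hq, hG, ← Real.sqrt_mul hlam.le]
    apply Real.sqrt_le_sqrt
    have e1 : (Gᵀᵀ * Gᵀ).trace = lam * (Zᵀ * V * Z).trace
        + lam * ((Φ * Z)ᵀ * (Φ * Z)).trace
        + ((Φᵀ * Φ * Z)ᵀ * (Φᵀ * Φ * Z)).trace := by
      have : Gᵀᵀ * Gᵀ = lam • (Zᵀ * V * Z) + lam • ((Φ * Z)ᵀ * (Φ * Z))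
          + (Φᵀ * Φ * Z)ᵀ * (Φᵀ * Φ * Z) := by
        rw [← hZ, Matrix.transpose_mul, hVt, hV]
        simp only [Matrix.transpose_mul, Matrix.transpose_transpose, Matrix.mul_add,
          Matrix.add_mul, Matrix.mul_assoc, Matrix.smul_mul, Matrix.mul_smul, Matrix.one_mul,
          smul_add]
        abel
      rw [this]
      simp [Matrix.trace_add, Matrix.trace_smul]
    have e2 : ((lam • Z)ᵀ * V * (lam • Z)).trace = lam * (lam * (Zᵀ * V * Z).trace) := by
      simp [Matrix.transpose_smul, Matrix.trace_smul]
    rw [e1, e2]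
    have := trace_gram_nonneg (Φ * Z)
    have := trace_gram_nonneg (Φᵀ * Φ * Z)
    apply mul_le_mul_of_nonneg_left _ hlam.le
    nlinarith [mul_nonneg hlam.le (trace_gram_nonneg (Φ * Z))]
  have h0 := hq (Ghat - G)ᵀ
  rw [Matrix.transpose_transpose] at h0
  rw [h0, hqi, hqi, hD, Matrix.mul_sub, Matrix.mul_add]
  refine (norm_sub_le _ _).trans (add_le_add (norm_add_le _ _) hbias)
end
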